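/- Zero small-time distinguishability criterion: suppose V is a weak Lyapunov-like function for 𝒯′ and there exist continuous nonnegative-definite functions W_γ: ℝⁿ → ℝ with ∇_ξV(ξ,γ)·f(ξ,γ) ≤ −W_γ(ξ) for all ξ ∈ χ_γ, and such that for each γ the system ẋ = f_γ(x), y = W_γ(x) is zero small-time distinguishable (for every δ > 0, any solution with W_γ(x(t)) = 0 for all t ∈ [0,δ) satisfies x(0) = 0). Then 𝒯′ is globally asymptotically stable. -/

import Mathlib

open Filter Set MeasureTheory Metric

/-- The switching times (points of left-discontinuity) of a signal `σ` on `(0,∞)`. -/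
def SwitchTimes {Γ : Type*} (σ : ℝ → Γ) : Set ℝ :=
  {s | 0 < s ∧ ∀ ε > 0, ∃ u, s - ε < u ∧ u < s ∧ σ u ≠ σ s}

/-- `σ` is locally constant from the right at every time (right-continuity and
piecewise constancy from the right). -/
def RightLocConst {Γ : Type*} (σ : ℝ → Γ) : Prop :=
  ∀ s : ℝ, ∃ ε > 0, ∀ u : ℝ, s ≤ u → u < s + ε → σ u = σ s

/-- `σ` has average dwell-time `τD` and chatter bound `N₀`: the number of switching
times in any open interval `(τ₁,τ₂) ⊆ ℝ₊` is at most `N₀ + (τ₂ - τ₁)/τD`. -/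
def HasADT {Γ : Type*} (σ : ℝ → Γ) (τD : ℝ) (N₀ : ℕ) : Prop :=
  ∀ τ₁ τ₂ : ℝ, 0 ≤ τ₁ → τ₁ < τ₂ →
    (Nat.card ↥(SwitchTimes σ ∩ Set.Ioo τ₁ τ₂) : ℝ) ≤ (N₀ : ℝ) + (τ₂ - τ₁) / τD

/-- A switching signal with average dwell-time `τD > 0` and chatter bound `N₀`:
piecewise constant, right-continuous, with the average dwell-time property. -/
def IsSwitchingSignal {Γ : Type*} (σ : ℝ → Γ) (τD : ℝ) (N₀ : ℕ) : Prop :=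
  RightLocConst σ ∧ HasADT σ τD N₀

/-- A trajectory of the switched system `ẋ = f(x,σ)`: a continuous curve satisfying the
integral equation on `[0,∞)`. -/
def IsTrajectory {n m : ℕ}
    (f : EuclideanSpace ℝ (Fin n) → Fin m → EuclideanSpace ℝ (Fin n))
    (x : ℝ → EuclideanSpace ℝ (Fin n)) (σ : ℝ → Fin m) : Prop :=
  ContinuousOn x (Set.Ici 0) ∧
  ∀ t : ℝ, 0 ≤ t → x t = x 0 + ∫ s in (0:ℝ)..t, f (x s) (σ s)

/-- A class-`𝒦_∞` function (modeled on `[0,∞)`): continuous, strictly increasing on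
`[0,∞)`, vanishing at `0`, unbounded. -/
def IsKinf (α : ℝ → ℝ) : Prop :=
  Continuous α ∧ StrictMonoOn α (Set.Ici 0) ∧ α 0 = 0 ∧
    Filter.Tendsto α Filter.atTop Filter.atTop

/-- The state constraint `x(t) ∈ χ_{σ(t)}` for all `t ≥ 0` (membership in `𝒯[χ]`). -/
def InTchi {n m : ℕ} (χ : Fin m → Set (EuclideanSpace ℝ (Fin n)))
    (x : ℝ → EuclideanSpace ℝ (Fin n)) (σ : ℝ → Fin m) : Prop :=
  ∀ t : ℝ, 0 ≤ t → x t ∈ χ (σ t)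

/-- `V` is a weak Lyapunov-like function for the family `T'` of trajectories:
(1) `V` is `C¹` in the state and sandwiched between two `𝒦_∞` functions of the norm
on each `χ_γ`; (2) its derivative along the `γ`-th vector field is `≤ 0` on `χ_γ`;
(3) for every trajectory of `T'` and switching times `s < s'` of its signal (with
`s` a switching time or `0`) carrying the same index, `V` at `s'` is at most `V`
evaluated at the switching time `s''` immediately following `s` (with index `σ s`). -/
def IsWeakLyap {n m : ℕ}
    (f : EuclideanSpace ℝ (Fin n) → Fin m → EuclideanSpace ℝ (Fin n))
    (χ : Fin m → Set (EuclideanSpace ℝ (Fin n)))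
    (T' : Set ((ℝ → EuclideanSpace ℝ (Fin n)) × (ℝ → Fin m)))
    (V : EuclideanSpace ℝ (Fin n) → Fin m → ℝ) : Prop :=
  (∀ γ : Fin m, ContDiff ℝ 1 (fun ξ => V ξ γ)) ∧
  (∃ α₁ α₂ : ℝ → ℝ, IsKinf α₁ ∧ IsKinf α₂ ∧
    ∀ ξ, ∀ γ : Fin m, ξ ∈ χ γ → α₁ ‖ξ‖ ≤ V ξ γ ∧ V ξ γ ≤ α₂ ‖ξ‖) ∧
  (∀ ξ, ∀ γ : Fin m, ξ ∈ χ γ → fderiv ℝ (fun ζ => V ζ γ) ξ (f ξ γ) ≤ 0) ∧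
  (∀ p ∈ T', ∀ s s'' s' : ℝ,
    s ∈ insert (0:ℝ) (SwitchTimes p.2) → s'' ∈ SwitchTimes p.2 →
    s' ∈ SwitchTimes p.2 → s < s'' →
    (∀ u ∈ Set.Ioo s s'', u ∉ SwitchTimes p.2) →
    s < s' → p.2 s = p.2 s' →
    V (p.1 s') (p.2 s') ≤ V (p.1 s'') (p.2 s))

/-!
Along a trajectory, `V(·, γ)` is antitone on the set of times spent in mode `γ`. Hence the norm at a
return to a mode is at most `β` of the norm at an earlier time in that mode, where `β ≈ α₁⁻¹ ∘ α₂`.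
Chaining these bounds through the first entries into each of the `m` modes gives the uniform bound
`β^[m]`, which is stability.

For attractivity, LaSalle's argument is run on windows of fixed length without switching, which
exist arbitrarily late. Translates of the bounded trajectory to such windows, taken along an
ultrafilter that also fixes the mode `γ`, converge to a solution `y` of `ẏ = f_γ(y)` on which
`V(·, γ)` is constant. Then `W_γ` vanishes along `y`, so `y 0 = 0` by distinguishability. Thus `0`
is a cluster point of the trajectory, and stability turns this into convergence.
-/

open scoped Topology

section Signals

variable {Γ : Type*} {σ : ℝ → Γ}

lemma mem_switchTimes_iff_frequently {s : ℝ} :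
    s ∈ SwitchTimes σ ↔ 0 < s ∧ ∃ᶠ u in 𝓝[<] s, σ u ≠ σ s := by
  refine and_congr_right fun _ => ?_
  rw [(nhdsLT_basis s).frequently_iff]
  refine ⟨fun h a ha => ?_, fun h ε hε => ?_⟩
  · obtain ⟨u, hau, hus, hu⟩ := h (s - a) (sub_pos.2 ha)
    exact ⟨u, ⟨by linarith, hus⟩, hu⟩
  · obtain ⟨u, hu, hne⟩ := h (s - ε) (sub_lt_self s hε)
    exact ⟨u, hu.1, hu.2, hne⟩

lemma notMem_switchTimes_of_eventually_eq {γ : Γ} {s : ℝ} (h : ∀ᶠ u in 𝓝 s, σ u = γ) :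
    s ∉ SwitchTimes σ := by
  rw [mem_switchTimes_iff_frequently, not_and, not_frequently]
  intro _
  filter_upwards [h.filter_mono nhdsWithin_le_nhds] with u hu
  rw [not_not, hu, h.self_of_nhds]

namespace RightLocConst

lemma eventually_eq_nhdsGE (hσ : RightLocConst σ) (t : ℝ) : ∀ᶠ u in 𝓝[≥] t, σ u = σ t := by
  obtain ⟨ε, hε, h⟩ := hσ t
  filter_upwards [Ico_mem_nhdsGE (lt_add_of_pos_right t hε)] with u hu using h u hu.1 hu.2

lemma eventually_eq_nhds (hσ : RightLocConst σ) {t : ℝ} (ht : 0 < t) (htS : t ∉ SwitchTimes σ) :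
    ∀ᶠ u in 𝓝 t, σ u = σ t := by
  rw [mem_switchTimes_iff_frequently, not_and, not_frequently] at htS
  rw [← nhdsLT_sup_nhdsGE, eventually_sup]
  exact ⟨by simpa only [not_not] using htS ht, hσ.eventually_eq_nhdsGE t⟩

lemma eventually_notMem_switchTimes_nhdsGT (hσ : RightLocConst σ) (t : ℝ) :
    ∀ᶠ u in 𝓝[>] t, u ∉ SwitchTimes σ := by
  have hconst : ∀ᶠ u in 𝓝[>] t, σ u = σ t :=
    (hσ.eventually_eq_nhdsGE t).filter_mono (nhdsWithin_mono t Ioi_subset_Ici_self)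
  filter_upwards [eventually_eventually_nhdsWithin.2 hconst, self_mem_nhdsWithin] with u hu htu
  rw [isOpen_Ioi.nhdsWithin_eq htu] at hu
  exact notMem_switchTimes_of_eventually_eq hu

lemma isClosed_insert_zero_switchTimes (hσ : RightLocConst σ) :
    IsClosed (insert 0 (SwitchTimes σ)) := by
  rw [← isOpen_compl_iff, isOpen_iff_eventually]
  intro t ht
  obtain ⟨ht₀, htS⟩ : t ≠ 0 ∧ t ∉ SwitchTimes σ := by
    simpa only [mem_compl_iff, mem_insert_iff, not_or] using ht
  rcases ht₀.lt_or_gt with hneg | hpos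
  · filter_upwards [Iio_mem_nhds hneg] with u (hu : u < 0)
    rintro (rfl | huS)
    · exact hu.false
    · exact hu.asymm huS.1
  · filter_upwards [(hσ.eventually_eq_nhds hpos htS).eventually_nhds,
      Ioi_mem_nhds hpos] with u hu (hu₀ : 0 < u)
    rintro (rfl | huS)
    · exact hu₀.false
    · exact notMem_switchTimes_of_eventually_eq hu huS

lemma countable_switchTimes (hσ : RightLocConst σ) : (SwitchTimes σ).Countable := by
  refine Countable.mono (fun t ht => ?_)
    (countable_setOfPred_isolated_right_within (s := SwitchTimes σ))
  refine ⟨ht, ?_⟩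
  rw [inter_comm, nhdsWithin_inter', inf_principal_eq_bot]
  exact hσ.eventually_notMem_switchTimes_nhdsGT t

end RightLocConst

lemma exists_isLeast_of_eventually_nhdsGT {α : Type*} [ConditionallyCompleteLinearOrder α]
    [TopologicalSpace α] [OrderTopology α] {S : Set α} {a : α} (ha : a ∈ lowerBounds S)
    (hne : S.Nonempty) (h : ∀ c ≥ a, ∀ᶠ u in 𝓝[>] c, u ∈ S → c ∈ S) : ∃ s, IsLeast S s := by
  have hglb := isGLB_csInf hne ⟨a, ha⟩
  suffices hmem : sInf S ∈ S from ⟨sInf S, hmem, hglb.1⟩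
  have hev : ∀ᶠ u in 𝓝[≥] sInf S, u ∈ S → sInf S ∈ S := by
    rw [← Ioi_insert, nhdsWithin_insert, eventually_sup]
    exact ⟨eventually_pure.2 id, h _ (hglb.2 ha)⟩
  obtain ⟨u, hu, himp⟩ := ((hglb.frequently_mem hne).and_eventually hev).exists
  exact himp hu

namespace RightLocConst

lemma exists_isLeast_Ici_inter_preimage (hσ : RightLocConst σ) {a : ℝ} {A : Set Γ}
    (hne : (Ici a ∩ σ ⁻¹' A).Nonempty) : ∃ s, IsLeast (Ici a ∩ σ ⁻¹' A) s := by
  refine exists_isLeast_of_eventually_nhdsGT (fun _ hu => hu.1) hne fun c hc => ?_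
  filter_upwards [(hσ.eventually_eq_nhdsGE c).filter_mono
    (nhdsWithin_mono c Ioi_subset_Ici_self)] with u hu huA
  exact ⟨hc, by simpa only [mem_preimage, hu] using huA.2⟩

lemma exists_isLeast_switchTimes_inter_Ioi (hσ : RightLocConst σ) {a : ℝ}
    (hne : (SwitchTimes σ ∩ Ioi a).Nonempty) : ∃ s, IsLeast (SwitchTimes σ ∩ Ioi a) s := by
  refine exists_isLeast_of_eventually_nhdsGT (fun _ hu => hu.2.le) hne fun c _ => ?_
  filter_upwards [hσ.eventually_notMem_switchTimes_nhdsGT c] with u hu huS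
  exact absurd huS.1 hu

lemma eq_of_forall_Ioc_notMem_switchTimes (hσ : RightLocConst σ) {a t : ℝ} (ha : 0 ≤ a)
    (hat : a ≤ t) (h : ∀ u ∈ Ioc a t, u ∉ SwitchTimes σ) : σ t = σ a := by
  by_contra hne
  obtain ⟨s, ⟨has, hs⟩, hmin⟩ :=
    hσ.exists_isLeast_Ici_inter_preimage (A := {σ a}ᶜ) ⟨t, hat, hne⟩
  have has' : a < s := lt_of_le_of_ne has fun heq => hs (heq ▸ rfl)
  refine h s ⟨has', hmin ⟨hat, hne⟩⟩ (mem_switchTimes_iff_frequently.2 ⟨ha.trans_lt has', ?_⟩)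
  refine Eventually.frequently ?_
  filter_upwards [Ioo_mem_nhdsLT has'] with u hu hus
  exact (hmin ⟨hu.1.le, fun hua => hs (hus.symm.trans hua)⟩).not_gt hu.2

lemma eq_of_forall_Ioo_notMem_switchTimes (hσ : RightLocConst σ) {a b : ℝ} (ha : 0 ≤ a)
    (h : ∀ u ∈ Ioo a b, u ∉ SwitchTimes σ) {t : ℝ} (ht : t ∈ Ico a b) : σ t = σ a :=
  hσ.eq_of_forall_Ioc_notMem_switchTimes ha ht.1 fun u hu => h u ⟨hu.1, hu.2.trans_lt ht.2⟩

lemma exists_le_forall_Ioc_notMem_switchTimes (hσ : RightLocConst σ) {t : ℝ} (ht : 0 ≤ t) :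
    ∃ a ∈ insert 0 (SwitchTimes σ), 0 ≤ a ∧ a ≤ t ∧ (∀ u ∈ Ioc a t, u ∉ SwitchTimes σ) ∧
      σ t = σ a := by
  obtain ⟨a, ⟨haS, ha, hat⟩, hmax⟩ :=
    (isCompact_Icc.inter_left hσ.isClosed_insert_zero_switchTimes).exists_isGreatest
      (⟨0, mem_insert _ _, left_mem_Icc.2 ht⟩ : (insert 0 (SwitchTimes σ) ∩ Icc 0 t).Nonempty)
  have hnone : ∀ u ∈ Ioc a t, u ∉ SwitchTimes σ := fun u hu huS =>
    (hmax ⟨Or.inr huS, huS.1.le, hu.2⟩).not_gt hu.1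
  exact ⟨a, haS, ha, hat, hnone, hσ.eq_of_forall_Ioc_notMem_switchTimes ha hat hnone⟩

end RightLocConst

/-- Weak dwell-time: arbitrarily late there are windows of length `2δ`, given by their centres,
on which `σ` is constant. -/
def HasWeakDwell (σ : ℝ → Γ) (δ : ℝ) : Prop :=
  ∃ᶠ u in atTop, ∀ s ∈ ball u δ, σ s = σ u

namespace RightLocConst

lemma exists_encard_switchTimes_inter_Ioo (hσ : RightLocConst σ) {k δ : ℝ}
    (hgap : ∀ u ≥ k, (SwitchTimes σ ∩ Ioo u (u + δ)).Nonempty) (N : ℕ) :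
    ∃ t > k, t ≤ k + (N + 1) * δ ∧ t ∈ SwitchTimes σ ∧ (SwitchTimes σ ∩ Ioo k t).encard = N := by
  have hnext : ∀ u ≥ k, ∃ t ≤ u + δ, IsLeast (SwitchTimes σ ∩ Ioi u) t := fun u hu => by
    obtain ⟨s, hsS, hs⟩ := hgap u hu
    obtain ⟨t, ht⟩ := hσ.exists_isLeast_switchTimes_inter_Ioi ⟨s, hsS, hs.1⟩
    exact ⟨t, (ht.2 ⟨hsS, hs.1⟩).trans hs.2.le, ht⟩
  induction N with
  | zero =>
    obtain ⟨t, htle, ⟨htS, hkt⟩, hmin⟩ := hnext k le_rfl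
    refine ⟨t, hkt, by simpa using htle, htS, ?_⟩
    rw [Nat.cast_zero, encard_eq_zero]
    exact eq_empty_of_forall_notMem fun u hu => (hmin ⟨hu.1, hu.2.1⟩).not_gt hu.2.2
  | succ N ih =>
    obtain ⟨t, hkt, htle, htS, hcard⟩ := ih
    obtain ⟨t', ht'le, ⟨ht'S, htt'⟩, hmin⟩ := hnext t hkt.le
    refine ⟨t', hkt.trans htt', ?_, ht'S, ?_⟩
    · push_cast; linarith
    · have hinsert : SwitchTimes σ ∩ Ioo k t' = insert t (SwitchTimes σ ∩ Ioo k t) := by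
        ext u
        constructor
        · rintro ⟨huS, hu⟩
          rcases lt_trichotomy u t with hut | rfl | htu
          · exact Or.inr ⟨huS, hu.1, hut⟩
          · exact Or.inl rfl
          · exact absurd hu.2 (hmin ⟨huS, htu⟩).not_gt
        · rintro (rfl | ⟨huS, hu⟩)
          · exact ⟨htS, hkt, htt'⟩
          · exact ⟨huS, hu.1, hu.2.trans htt'⟩
      rw [hinsert, encard_insert_of_notMem fun h => h.2.2.false, hcard, Nat.cast_succ]

end RightLocConst

lemma IsSwitchingSignal.exists_switchTimes_inter_Ioo_eq_empty {τD : ℝ} {N₀ : ℕ} (hτD : 0 < τD)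
    (hσ : IsSwitchingSignal σ τD N₀) :
    ∃ δ > 0, ∀ k ≥ 0, ∃ u ≥ k, SwitchTimes σ ∩ Ioo u (u + δ) = ∅ := by
  obtain ⟨N, hN⟩ := exists_nat_gt ((N₀ : ℝ) + 1 / τD)
  refine ⟨1 / (N + 1), by positivity, fun k hk => ?_⟩
  by_contra! hgap
  obtain ⟨t, hkt, htle, -, hcard⟩ := hσ.1.exists_encard_switchTimes_inter_Ioo hgap N
  have htk : t - k ≤ 1 := by
    rw [mul_one_div_cancel (by positivity)] at htle
    linarith
  have hle : (N : ℝ) ≤ N₀ + (t - k) / τD := by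
    have hncard : (SwitchTimes σ ∩ Ioo k t).ncard = N := by
      rw [ncard_def, hcard, ENat.toNat_natCast]
    simpa only [Nat.card_coe_set_eq, hncard] using hσ.2 k t hk hkt
  have : (t - k) / τD ≤ 1 / τD := by gcongr
  linarith

lemma IsSwitchingSignal.exists_hasWeakDwell {τD : ℝ} {N₀ : ℕ} (hτD : 0 < τD)
    (hσ : IsSwitchingSignal σ τD N₀) : ∃ δ > 0, HasWeakDwell σ δ := by
  obtain ⟨δ, hδ, hgap⟩ := hσ.exists_switchTimes_inter_Ioo_eq_empty hτD
  refine ⟨δ / 2, half_pos hδ, frequently_atTop.2 fun K => ?_⟩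
  obtain ⟨u, hu, hempty⟩ := hgap (max K 0) (le_max_right _ _)
  obtain ⟨hKu, hu₀⟩ := max_le_iff.1 hu
  have hconst : ∀ s ∈ Ico u (u + δ), σ s = σ u := fun s hs =>
    hσ.1.eq_of_forall_Ioo_notMem_switchTimes hu₀
      (fun v hv hvS => hempty.subset ⟨hvS, hv⟩) hs
  refine ⟨u + δ / 2, by linarith, fun s hs => ?_⟩
  rw [Real.ball_eq_Ioo] at hs
  rw [hconst s ⟨by linarith [hs.1], by linarith [hs.2]⟩,
    hconst (u + δ / 2) ⟨by linarith, by linarith⟩]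

lemma HasWeakDwell.exists_ultrafilter [Finite Γ] {δ : ℝ} (h : HasWeakDwell σ δ) :
    ∃ (U : Ultrafilter ℝ) (γ : Γ), (U : Filter ℝ) ≤ atTop ∧ ∀ᶠ u in U, ∀ s ∈ ball u δ, σ s = γ := by
  have : NeBot (atTop ⊓ 𝓟 {u | ∀ s ∈ ball u δ, σ s = σ u}) := frequently_mem_iff_neBot.1 h
  obtain ⟨U, hU⟩ := Ultrafilter.exists_le (atTop ⊓ 𝓟 {u | ∀ s ∈ ball u δ, σ s = σ u})
  have hconst : ∀ᶠ u in (U : Filter ℝ), ∃ γ, ∀ s ∈ ball u δ, σ s = γ := by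
    filter_upwards [le_principal_iff.1 (hU.trans inf_le_right)] with u hu using ⟨σ u, hu⟩
  obtain ⟨γ, hγ⟩ := Ultrafilter.eventually_exists_iff.1 hconst
  exact ⟨U, γ, hU.trans inf_le_left, hγ⟩

end Signals

lemma RightLocConst.intervalIntegrable_apply {X F Γ : Type*} [TopologicalSpace X]
    [NormedAddCommGroup F] [Finite Γ] {f : X → Γ → F} (hf : ∀ γ, Continuous fun ξ => f ξ γ)
    {σ : ℝ → Γ} (hσ : RightLocConst σ) {x : ℝ → X} (hx : ContinuousOn x (Ici 0)) {t : ℝ}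
    (ht : 0 ≤ t) : IntervalIntegrable (fun s => f (x s) (σ s)) volume 0 t := by
  have hcont : ContinuousOn (fun s => f (x s) (σ s)) (Ioo 0 t \ SwitchTimes σ) := by
    rintro s ⟨hs, hsS⟩
    have hxs : ContinuousAt x s := (hx s hs.1.le).continuousAt (Ici_mem_nhds hs.1)
    have hfx : ContinuousAt (fun u => f (x u) (σ s)) s := (hf (σ s)).continuousAt.comp hxs
    refine (hfx.congr ?_).continuousWithinAt
    filter_upwards [hσ.eventually_eq_nhds hs.1 hsS] with u hu
    rw [hu]
  have hmeas : AEStronglyMeasurable (fun s => f (x s) (σ s)) (volume.restrict (Ioc 0 t)) := by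
    have hae : (Ioo 0 t \ SwitchTimes σ : Set ℝ) =ᵐ[volume] Ioc 0 t :=
      (sdiff_null_ae_eq_self (hσ.countable_switchTimes.measure_zero _)).trans Ioo_ae_eq_Ioc
    rw [← Measure.restrict_congr_set hae]
    exact hcont.aestronglyMeasurable
      (measurableSet_Ioo.diff hσ.countable_switchTimes.measurableSet)
  obtain ⟨C, hC⟩ : ∃ C, ∀ s ∈ Icc 0 t, ‖f (x s) (σ s)‖ ≤ C := by
    choose C hC using fun γ => isCompact_Icc.exists_bound_of_continuousOn
      ((hf γ).comp_continuousOn (hx.mono (Icc_subset_Ici_self : Icc 0 t ⊆ Ici 0)))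
    obtain ⟨M, hM⟩ := Finite.exists_le C
    exact ⟨M, fun s hs => (hC (σ s) s hs).trans (hM (σ s))⟩
  rw [intervalIntegrable_iff, uIoc_of_le ht]
  refine Integrable.of_bound hmeas C ?_
  filter_upwards [ae_restrict_mem measurableSet_Ioc] with s hs using hC s (Ioc_subset_Icc_self hs)

lemma IsTrajectory.hasDerivAt {n m : ℕ}
    {f : EuclideanSpace ℝ (Fin n) → Fin m → EuclideanSpace ℝ (Fin n)}
    (hf : ∀ γ, Continuous fun ξ => f ξ γ) {x : ℝ → EuclideanSpace ℝ (Fin n)} {σ : ℝ → Fin m}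
    (hx : IsTrajectory f x σ) (hσ : RightLocConst σ) {t : ℝ} (ht : 0 < t)
    (htS : t ∉ SwitchTimes σ) : HasDerivAt x (f (x t) (σ t)) t := by
  have hcont : ∀ᶠ s in 𝓝 t, ContinuousAt (fun u => f (x u) (σ u)) s := by
    filter_upwards [(hσ.eventually_eq_nhds ht htS).eventually_nhds, Ioi_mem_nhds ht] with s hs hs₀
    have hxs : ContinuousAt x s := (hx.1 s (mem_Ioi.1 hs₀).le).continuousAt (Ici_mem_nhds hs₀)
    refine ContinuousAt.congr ((hf (σ t)).continuousAt.comp hxs) ?_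
    filter_upwards [hs] with u hu
    rw [Function.comp_apply, hu]
  have hmeas : StronglyMeasurableAtFilter (fun u => f (x u) (σ u)) (𝓝 t) := by
    obtain ⟨s, hs, hso, hts⟩ := _root_.eventually_nhds_iff.1 hcont
    exact ContinuousOn.stronglyMeasurableAtFilter hso
      (fun u hu => (hs u hu).continuousWithinAt) t hts
  have hderiv := (intervalIntegral.integral_hasDerivAt_right
    (hσ.intervalIntegrable_apply hf hx.1 ht.le) hmeas hcont.self_of_nhds).const_add (x 0)
  refine hderiv.congr_of_eventuallyEq ?_
  filter_upwards [Ioi_mem_nhds ht] with s hs using hx.2 s (mem_Ioi.1 hs).le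

lemma antitoneOn_comp_of_fderiv_nonpos {E : Type*} [NormedAddCommGroup E] [NormedSpace ℝ E]
    {v : E → E} {V : E → ℝ} (hV : Differentiable ℝ V) {x : ℝ → E} {a b : ℝ}
    (hx : ContinuousOn x (Icc a b)) (hderiv : ∀ t ∈ Ioo a b, HasDerivAt x (v (x t)) t)
    (hle : ∀ t ∈ Ioo a b, fderiv ℝ V (x t) (v (x t)) ≤ 0) :
    AntitoneOn (fun t => V (x t)) (Icc a b) := by
  refine antitoneOn_of_hasDerivWithinAt_nonpos (convex_Icc a b)
    (hV.continuous.comp_continuousOn hx) (f' := fun t => fderiv ℝ V (x t) (v (x t))) ?_ ?_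
  · rw [interior_Icc]
    exact fun t ht =>
      ((hV (x t)).hasFDerivAt.comp_hasDerivAt t (hderiv t ht)).hasDerivWithinAt
  · rwa [interior_Icc]

section Monotonicity

variable {n m : ℕ} {f : EuclideanSpace ℝ (Fin n) → Fin m → EuclideanSpace ℝ (Fin n)}
  {χ : Fin m → Set (EuclideanSpace ℝ (Fin n))}
  {T' : Set ((ℝ → EuclideanSpace ℝ (Fin n)) × (ℝ → Fin m))}
  {V : EuclideanSpace ℝ (Fin n) → Fin m → ℝ}
  {p : (ℝ → EuclideanSpace ℝ (Fin n)) × (ℝ → Fin m)}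

lemma IsWeakLyap.le_of_forall_Ioo_notMem_switchTimes (hV : IsWeakLyap f χ T' V)
    (hf : ∀ γ, Continuous fun ξ => f ξ γ) (hx : IsTrajectory f p.1 p.2) (hχ : InTchi χ p.1 p.2)
    (hσ : RightLocConst p.2) {a s t : ℝ} (ha : 0 ≤ a) (has : a ≤ s) (hst : s ≤ t)
    (hS : ∀ u ∈ Ioo a t, u ∉ SwitchTimes p.2) : V (p.1 t) (p.2 a) ≤ V (p.1 s) (p.2 a) := by
  have hmode : ∀ u ∈ Ioo s t, p.2 u = p.2 a := fun u hu =>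
    hσ.eq_of_forall_Ioo_notMem_switchTimes ha hS ⟨has.trans hu.1.le, hu.2⟩
  refine antitoneOn_comp_of_fderiv_nonpos (v := fun ξ => f ξ (p.2 a))
    ((hV.1 (p.2 a)).differentiable one_ne_zero)
    (hx.1.mono fun u hu => (ha.trans has).trans hu.1) (fun u hu => ?_) (fun u hu => ?_)
    (left_mem_Icc.2 hst) (right_mem_Icc.2 hst) hst
  · rw [← hmode u hu]
    exact hx.hasDerivAt hf hσ ((ha.trans has).trans_lt hu.1) (hS u ⟨has.trans_lt hu.1, hu.2⟩)
  · exact hV.2.2.1 _ _ (hmode u hu ▸ hχ u ((ha.trans has).trans hu.1.le))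

-- The return condition in `IsWeakLyap` compares `V` at switching times only: it is applied to the
-- last switching time `a ≤ s`, the first one `b > s`, and the last one `c ≤ t`.
lemma IsWeakLyap.antitoneOn_mode (hV : IsWeakLyap f χ T' V) (hf : ∀ γ, Continuous fun ξ => f ξ γ)
    (hp : p ∈ T') (hx : IsTrajectory f p.1 p.2) (hχ : InTchi χ p.1 p.2) (hσ : RightLocConst p.2)
    (γ : Fin m) : AntitoneOn (fun t => V (p.1 t) γ) (Ici 0 ∩ p.2 ⁻¹' {γ}) := by
  rintro s ⟨hs, rfl⟩ t ⟨ht, hγt : p.2 t = p.2 s⟩ hst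
  obtain ⟨a, haS, ha, has, hanone, hγs⟩ := hσ.exists_le_forall_Ioc_notMem_switchTimes hs
  have hdecr : ∀ {c r r' : ℝ}, 0 ≤ c → c ≤ r → r ≤ r' → (∀ u ∈ Ioo c r', u ∉ SwitchTimes p.2) →
      V (p.1 r') (p.2 c) ≤ V (p.1 r) (p.2 c) :=
    hV.le_of_forall_Ioo_notMem_switchTimes hf hx hχ hσ
  have hextend : ∀ r, (∀ u ∈ Ioo s r, u ∉ SwitchTimes p.2) → ∀ u ∈ Ioo a r, u ∉ SwitchTimes p.2 :=
    fun r hr u hu => (le_or_gt u s).elim (fun hus => hanone u ⟨hu.1, hus⟩)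
      (fun hsu => hr u ⟨hsu, hu.2⟩)
  simp only [hγs]
  by_cases hB : (SwitchTimes p.2 ∩ Ioc s t).Nonempty
  · obtain ⟨r, hrS, hr⟩ := hB
    obtain ⟨b, ⟨hbS, hsb⟩, hbmin⟩ := hσ.exists_isLeast_switchTimes_inter_Ioi ⟨r, hrS, hr.1⟩
    obtain ⟨c, hcS, hc, hct, hcnone, hγc⟩ := hσ.exists_le_forall_Ioc_notMem_switchTimes ht
    have hsc : s < c := hr.1.trans_le (le_of_not_gt fun hcr => hcnone r ⟨hcr, hr.2⟩ hrS)
    have hab : ∀ u ∈ Ioo a b, u ∉ SwitchTimes p.2 :=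
      hextend b fun u hu huS => (hbmin ⟨huS, hu.1⟩).not_gt hu.2
    have hac : p.2 a = p.2 c := by rw [← hγs, ← hγt, hγc]
    calc V (p.1 t) (p.2 a) = V (p.1 t) (p.2 c) := by rw [hac]
      _ ≤ V (p.1 c) (p.2 c) := hdecr hc le_rfl hct fun u hu => hcnone u ⟨hu.1, hu.2.le⟩
      _ ≤ V (p.1 b) (p.2 a) := hV.2.2.2 p hp a b c haS hbS
        (hcS.resolve_left (hs.trans_lt hsc).ne') (has.trans_lt hsb) hab (has.trans_lt hsc) hac
      _ ≤ V (p.1 s) (p.2 a) := hdecr ha has hsb.le hab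
  · exact hdecr ha has hst <| hextend t fun u hu huS => hB ⟨u, huS, hu.1, hu.2.le⟩

end Monotonicity

section Gain

lemma IsKinf.mapsTo_Ici {α : ℝ → ℝ} (hα : IsKinf α) : MapsTo α (Ici 0) (Ici 0) := fun r hr => by
  simpa only [hα.2.2.1, mem_Ici] using hα.2.1.monotoneOn self_mem_Ici hr hr

lemma IsKinf.comp {α β : ℝ → ℝ} (hα : IsKinf α) (hβ : IsKinf β) : IsKinf (α ∘ β) :=
  ⟨hα.1.comp hβ.1, hα.2.1.comp hβ.2.1 hβ.mapsTo_Ici,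
    by rw [Function.comp_apply, hβ.2.2.1, hα.2.2.1], hα.2.2.2.comp hβ.2.2.2⟩

lemma isKinf_id : IsKinf id := ⟨continuous_id, strictMonoOn_id, rfl, tendsto_id⟩

lemma IsKinf.iterate {α : ℝ → ℝ} (hα : IsKinf α) : ∀ k : ℕ, IsKinf α^[k]
  | 0 => isKinf_id
  | k + 1 => (hα.iterate k).comp hα

lemma IsKinf.exists_orderIso_eqOn {α : ℝ → ℝ} (hα : IsKinf α) :
    ∃ e : ℝ ≃o ℝ, EqOn e α (Ici 0) := by
  set g : ℝ → ℝ := fun r => α (max r 0) + min r 0 with hg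
  have hpos : EqOn g α (Ici 0) := fun r (hr : 0 ≤ r) => by
    simp only [hg, max_eq_left hr, min_eq_right hr, add_zero]
  have hneg : EqOn g id (Iic 0) := fun r (hr : r ≤ 0) => by
    simp only [hg, max_eq_right hr, min_eq_left hr, hα.2.2.1, zero_add, id]
  have hmono : StrictMono g :=
    (strictMonoOn_id.congr hneg.symm).Iic_union_Ici (hα.2.1.congr hpos.symm)
  have hcont : Continuous g := by
    have := hα.1
    fun_prop
  have htop : Tendsto g atTop atTop :=
    hα.2.2.2.congr' (hpos.symm.eventuallyEq_of_mem (Ici_mem_atTop 0))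
  have hbot : Tendsto g atBot atBot :=
    tendsto_id.congr' (hneg.symm.eventuallyEq_of_mem (Iic_mem_atBot 0))
  exact ⟨hmono.orderIsoOfSurjective g (hcont.surjective htop hbot), hpos⟩

lemma IsKinf.exists_gain {α₁ α₂ : ℝ → ℝ} (h₁ : IsKinf α₁) (h₂ : IsKinf α₂) :
    ∃ β : ℝ → ℝ, IsKinf β ∧ Monotone β ∧ id ≤ β ∧
      ∀ r ≥ 0, ∀ s ≥ 0, α₁ r ≤ α₂ s → r ≤ β s := by
  obtain ⟨e₁, he₁⟩ := h₁.exists_orderIso_eqOn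
  obtain ⟨e₂, he₂⟩ := h₂.exists_orderIso_eqOn
  have hmono : StrictMono fun s => max s (e₁.symm (e₂ s)) := fun s t hst =>
    max_lt_max hst (e₁.symm.strictMono (e₂.strictMono hst))
  refine ⟨fun s => max s (e₁.symm (e₂ s)),
    ⟨continuous_id.max (e₁.symm.continuous.comp e₂.continuous), hmono.strictMonoOn _, ?_,
    tendsto_atTop_mono (fun _ => le_max_left _ _) tendsto_id⟩, hmono.monotone,
    fun _ => le_max_left _ _, fun r hr s hs h => le_max_of_le_right ?_⟩
  · have : e₁.symm 0 = 0 := by rw [e₁.symm_apply_eq, he₁ self_mem_Ici, h₁.2.2.1]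
    dsimp only
    rw [he₂ self_mem_Ici, h₂.2.2.1, this, max_self]
  · rwa [e₁.le_symm_apply, he₁ hr, he₂ hs]

end Gain

section Stability

variable {n m : ℕ} {f : EuclideanSpace ℝ (Fin n) → Fin m → EuclideanSpace ℝ (Fin n)}
  {χ : Fin m → Set (EuclideanSpace ℝ (Fin n))}
  {T' : Set ((ℝ → EuclideanSpace ℝ (Fin n)) × (ℝ → Fin m))}
  {V : EuclideanSpace ℝ (Fin n) → Fin m → ℝ}

lemma RightLocConst.le_iterate_of_return {Γ α : Type*} [Finite Γ] [Preorder α]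
    [TopologicalSpace α] [ClosedIicTopology α] {σ : ℝ → Γ} (hσ : RightLocConst σ) {φ : ℝ → α}
    {t₀ : ℝ} (hφ : ContinuousOn φ (Ici t₀)) {β : α → α}
    (hβ : Monotone β) (hid : id ≤ β)
    (hret : ∀ s ≥ t₀, ∀ t ≥ s, σ s = σ t → φ t ≤ β (φ s)) (k : ℕ) :
    ∀ t ≥ t₀, (σ '' Icc t₀ t).ncard ≤ k → φ t ≤ β^[k] (φ t₀) := by
  induction k with
  | zero =>
    intro t ht hcard
    have hempty := (ncard_eq_zero (toFinite _)).1 (Nat.le_zero.1 hcard)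
    exact absurd (mem_image_of_mem σ (left_mem_Icc.2 ht)) (hempty ▸ notMem_empty _)
  | succ k ih =>
    intro t ht hcard
    obtain ⟨s, ⟨hs, hst : σ s = σ t⟩, hmin⟩ :=
      hσ.exists_isLeast_Ici_inter_preimage (A := {σ t}) ⟨t, ht, rfl⟩
    rw [Function.iterate_succ_apply']
    refine (hret s hs t (hmin ⟨ht, rfl⟩) hst).trans (hβ ?_)
    rcases eq_or_lt_of_le (mem_Ici.1 hs) with rfl | hlt
    · exact Function.id_le_iterate_of_id_le hid k _
    have hbefore : ∀ u ∈ Ioo t₀ s, φ u ≤ β^[k] (φ t₀) := fun u hu => by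
      refine ih u hu.1.le (Nat.lt_succ_iff.1 (lt_of_lt_of_le (ncard_lt_ncard ?_) hcard))
      have hsub : Icc t₀ u ⊆ Icc t₀ t :=
        Icc_subset_Icc_right (hu.2.le.trans (hmin ⟨ht, rfl⟩))
      refine (ssubset_iff_of_subset (image_mono hsub)).2
        ⟨σ t, mem_image_of_mem σ (right_mem_Icc.2 ht), ?_⟩
      rintro ⟨v, hv, hvt⟩
      exact (hmin ⟨hv.1, hvt⟩).not_gt (hv.2.trans_lt hu.2)
    have hlim : Tendsto φ (𝓝[<] s) (𝓝 (φ s)) :=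
      ((hφ s hs).continuousAt (Ici_mem_nhds hlt)).mono_left nhdsWithin_le_nhds
    refine le_of_tendsto hlim ?_
    filter_upwards [Ioo_mem_nhdsLT hlt] with u hu using hbefore u hu

lemma IsWeakLyap.exists_isKinf_norm_le (hV : IsWeakLyap f χ T' V)
    (hf : ∀ γ, Continuous fun ξ => f ξ γ)
    (hT' : ∀ p ∈ T', IsTrajectory f p.1 p.2 ∧ InTchi χ p.1 p.2 ∧ RightLocConst p.2) :
    ∃ α : ℝ → ℝ, IsKinf α ∧
      ∀ p ∈ T', ∀ t₀ t : ℝ, 0 ≤ t₀ → t₀ ≤ t → ‖p.1 t‖ ≤ α ‖p.1 t₀‖ := by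
  obtain ⟨α₁, α₂, hα₁, hα₂, hα⟩ := hV.2.1
  obtain ⟨β, hβ, hmono, hid, hgain⟩ := hα₁.exists_gain hα₂
  refine ⟨β^[m], hβ.iterate m, fun p hp t₀ t ht₀ ht => ?_⟩
  obtain ⟨hx, hχ, hσ⟩ := hT' p hp
  have hret : ∀ s ≥ t₀, ∀ t ≥ s, p.2 s = p.2 t → ‖p.1 t‖ ≤ β ‖p.1 s‖ := fun s hs t hst hmode => by
    have hs₀ : 0 ≤ s := ht₀.trans hs
    have hVle : V (p.1 t) (p.2 s) ≤ V (p.1 s) (p.2 s) :=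
      hV.antitoneOn_mode hf hp hx hχ hσ (p.2 s) ⟨hs₀, rfl⟩ ⟨hs₀.trans hst, hmode.symm⟩ hst
    refine hgain _ (norm_nonneg _) _ (norm_nonneg _) ?_
    calc α₁ ‖p.1 t‖ ≤ V (p.1 t) (p.2 s) := (hα _ _ (hmode ▸ hχ t (hs₀.trans hst))).1
      _ ≤ V (p.1 s) (p.2 s) := hVle
      _ ≤ α₂ ‖p.1 s‖ := (hα _ _ (hχ s hs₀)).2
  refine hσ.le_iterate_of_return (hx.1.norm.mono (Ici_subset_Ici.2 ht₀)) hmono hid hret m t ht ?_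
  simpa only [Nat.card_fin] using ncard_le_card (p.2 '' Icc t₀ t)

lemma tendsto_zero_of_mapClusterPt {E : Type*} [SeminormedAddCommGroup E] {x : ℝ → E} {a : ℝ}
    {α : ℝ → ℝ} (hα : ContinuousAt α 0) (hα₀ : α 0 = 0)
    (hle : ∀ t₀ ≥ a, ∀ t ≥ t₀, ‖x t‖ ≤ α ‖x t₀‖) (hx : MapClusterPt 0 atTop x) :
    Tendsto x atTop (𝓝 0) := by
  rw [tendsto_zero_iff_norm_tendsto_zero]
  refine tendsto_order.2 ⟨fun ε hε => Eventually.of_forall fun t => hε.trans_le (norm_nonneg _),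
    fun ε hε => ?_⟩
  have hnorm : Tendsto (fun ξ : E => α ‖ξ‖) (𝓝 0) (𝓝 0) := by
    simpa only [hα₀, Function.comp_def] using hα.tendsto.comp tendsto_norm_zero
  obtain ⟨t₀, hsmall, ht₀⟩ :=
    ((hx.frequently (hnorm.eventually (gt_mem_nhds hε))).and_eventually
      (eventually_ge_atTop a)).exists
  filter_upwards [eventually_ge_atTop t₀] with t ht using (hle t₀ ht₀ t ht).trans_lt hsmall

end Stability

section Limits

lemma tendsto_prod_nhds_of_lipschitzOnWith {ι X E : Type*} [PseudoMetricSpace X]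
    [PseudoMetricSpace E] {l : Filter ι} {F : ι → X → E} {s : Set X} {K : NNReal} {t : X} {a : E}
    (hs : s ∈ 𝓝 t) (hF : ∀ᶠ i in l, LipschitzOnWith K (F i) s)
    (ha : Tendsto (fun i => F i t) l (𝓝 a)) :
    Tendsto (fun q : ι × X => F q.1 q.2) (l ×ˢ 𝓝 t) (𝓝 a) := by
  rw [tendsto_iff_dist_tendsto_zero]
  have hbound : Tendsto (fun q : ι × X => K * dist q.2 t + dist (F q.1 t) a) (l ×ˢ 𝓝 t) (𝓝 0) := by
    simpa only [mul_zero, add_zero, Function.comp_def, id_eq] using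
      (((tendsto_iff_dist_tendsto_zero.1 tendsto_id).comp tendsto_snd).const_mul (K : ℝ)).add
        ((tendsto_iff_dist_tendsto_zero.1 ha).comp tendsto_fst)
  refine squeeze_zero' (Eventually.of_forall fun _ => dist_nonneg) ?_ hbound
  filter_upwards [hF.prod_mk hs] with q hq
  calc dist (F q.1 q.2) a ≤ dist (F q.1 q.2) (F q.1 t) + dist (F q.1 t) a := dist_triangle _ _ _
    _ ≤ K * dist q.2 t + dist (F q.1 t) a := by
      gcongr
      exact hq.1.dist_le_mul _ hq.2 _ (mem_of_mem_nhds hs)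

lemma hasDerivAt_of_tendsto {ι E : Type*} [NormedAddCommGroup E] [NormedSpace ℝ E] {l : Filter ι}
    [NeBot l] {F : ι → ℝ → E} {y : ℝ → E} {v : E → E} {s : Set ℝ} {K : NNReal} (hs : IsOpen s)
    (hconv : Convex ℝ s) (hv : Continuous v)
    (hF : ∀ᶠ i in l, ∀ t ∈ s, HasDerivAt (F i) (v (F i t)) t)
    (hK : ∀ᶠ i in l, ∀ t ∈ s, ‖v (F i t)‖₊ ≤ K)
    (hy : Tendsto F l (𝓝 y)) {t : ℝ} (ht : t ∈ s) : HasDerivAt y (v (y t)) t := by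
  have hst : s ∈ 𝓝 t := hs.mem_nhds ht
  have hlip : ∀ᶠ i in l, LipschitzOnWith K (F i) s := by
    filter_upwards [hF, hK] with i hFi hKi
    exact hconv.lipschitzOnWith_of_nnnorm_hasDerivWithin_le
      (fun u hu => (hFi u hu).hasDerivWithinAt) hKi
  have hylip : LipschitzOnWith K y s :=
    (isClosed_setOfPred_lipschitzOnWith K s).mem_of_tendsto hy hlip
  have hycont : Tendsto (fun q : ι × ℝ => y q.2) (l ×ˢ 𝓝 t) (𝓝 (y t)) :=
    (hylip.continuousOn.continuousAt hst).tendsto.comp tendsto_snd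
  have hjoint : Tendsto (fun q : ι × ℝ => F q.1 q.2) (l ×ˢ 𝓝 t) (𝓝 (y t)) :=
    tendsto_prod_nhds_of_lipschitzOnWith hst hlip (hy.apply_nhds t)
  have hunif : TendstoUniformlyOnFilter (fun i u => v (F i u)) (fun u => v (y u)) l (𝓝 t) :=
    tendstoUniformlyOnFilter_iff_tendsto.2 <|
      (((hv.tendsto _).comp hycont).prodMk_nhds ((hv.tendsto _).comp hjoint)).mono_right
        (nhds_le_uniformity _)
  refine hasDerivAt_of_tendstoUniformlyOnFilter hunif ?_ (Eventually.of_forall hy.apply_nhds)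
  filter_upwards [hF.prod_mk hst] with q hq using hq.1 q.2 hq.2

lemma eq_of_tendsto_of_antitoneOn {ι α β : Type*} [Preorder α] [PartialOrder β]
    [TopologicalSpace β] [OrderClosedTopology β] {l : Filter ι} [NeBot l] {v : α → β} {s : Set α}
    (hv : AntitoneOn v s) {a b : ι → α} (ha : Tendsto a l (atTop ⊓ 𝓟 s))
    (hb : Tendsto b l (atTop ⊓ 𝓟 s)) {A B : β} (hA : Tendsto (v ∘ a) l (𝓝 A))
    (hB : Tendsto (v ∘ b) l (𝓝 B)) : A = B := by
  have hle : ∀ {a b : ι → α} {A B : β}, Tendsto a l (atTop ⊓ 𝓟 s) → Tendsto b l (atTop ⊓ 𝓟 s) →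
      Tendsto (v ∘ a) l (𝓝 A) → Tendsto (v ∘ b) l (𝓝 B) → A ≤ B := by
    intro a b A B ha hb hA hB
    rw [tendsto_inf, tendsto_principal] at ha hb
    refine ge_of_tendsto hB ?_
    filter_upwards [hb.2] with i hi
    refine le_of_tendsto hA ?_
    filter_upwards [ha.2, ha.1.eventually_ge_atTop (b i)] with j hj hij using hv hi hj hij
  exact (hle ha hb hA hB).antisymm (hle hb ha hB hA)

end Limits

section LaSalle

/-- `y` is a limit of translates of `x` along windows of half-length `δ` in mode `γ`: the filter
`l` of window centres tends to infinity, and `x (u + t) → y t` for every `t` as `u` runs along `l`.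
Centring the windows makes `0` an interior time for the limit curve. -/
structure IsWindowLimit {X Γ : Type*} [TopologicalSpace X] (x : ℝ → X) (σ : ℝ → Γ) (δ : ℝ) (γ : Γ)
    (l : Filter ℝ) (y : ℝ → X) : Prop where
  le_atTop : l ≤ atTop
  eventually_mode : ∀ᶠ u in l, ∀ s ∈ ball u δ, σ s = γ
  tendsto : Tendsto (fun u t => x (u + t)) l (𝓝 y)

lemma HasWeakDwell.exists_isWindowLimit {X Γ : Type*} [TopologicalSpace X] [Finite Γ] {x : ℝ → X}
    {σ : ℝ → Γ} {δ : ℝ} (hσ : HasWeakDwell σ δ) {K : Set X} (hK : IsCompact K)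
    (hx : ∀ᶠ t in atTop, x t ∈ K) : ∃ γ l y, NeBot l ∧ IsWindowLimit x σ δ γ l y := by
  obtain ⟨U, γ, hU, hγ⟩ := hσ.exists_ultrafilter
  have hlim : ∀ t, ∃ ξ, Tendsto (fun u => x (u + t)) U (𝓝 ξ) := fun t => by
    have hmem : ∀ᶠ u in U, x (u + t) ∈ K :=
      ((tendsto_atTop_add_const_right atTop t tendsto_id).mono_left hU).eventually hx
    obtain ⟨ξ, -, hξ⟩ := hK.ultrafilter_le_nhds' (U.map fun u => x (u + t)) hmem
    exact ⟨ξ, hξ⟩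
  choose y hy using hlim
  exact ⟨γ, U, y, U.neBot, hU, hγ, tendsto_pi_nhds.2 hy⟩

namespace IsWindowLimit

section

variable {X Γ : Type*} [TopologicalSpace X] {x : ℝ → X} {σ : ℝ → Γ} {δ : ℝ} {γ : Γ} {l : Filter ℝ}
  {y : ℝ → X}

lemma mapClusterPt_zero [NeBot l] (h : IsWindowLimit x σ δ γ l y) :
    MapClusterPt (y 0) atTop x := by
  have h₀ : Tendsto x l (𝓝 (y 0)) := by simpa only [add_zero] using h.tendsto.apply_nhds 0
  exact h₀.mapClusterPt.mono h.le_atTop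

lemma tendsto_add_atTop_inf_mode (h : IsWindowLimit x σ δ γ l y) {t : ℝ} (ht : t ∈ ball 0 δ) :
    Tendsto (fun u => u + t) l (atTop ⊓ 𝓟 (Ici 0 ∩ σ ⁻¹' {γ})) := by
  have htop : Tendsto (fun u => u + t) l atTop :=
    (tendsto_atTop_add_const_right atTop t tendsto_id).mono_left h.le_atTop
  refine tendsto_inf.2 ⟨htop, tendsto_principal.2 ?_⟩
  filter_upwards [h.eventually_mode, htop.eventually_ge_atTop 0] with u hu hut
  exact ⟨hut, hu _ (by simpa [mem_ball] using ht)⟩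

end

variable {n m : ℕ} {f : EuclideanSpace ℝ (Fin n) → Fin m → EuclideanSpace ℝ (Fin n)}
  {χ : Fin m → Set (EuclideanSpace ℝ (Fin n))} {x : ℝ → EuclideanSpace ℝ (Fin n)} {σ : ℝ → Fin m}
  {δ : ℝ} {γ : Fin m} {l : Filter ℝ} [NeBot l] {y : ℝ → EuclideanSpace ℝ (Fin n)}

lemma mem_of_inTchi (h : IsWindowLimit x σ δ γ l y) (hcl : IsClosed (χ γ)) (hχ : InTchi χ x σ)
    {t : ℝ} (ht : t ∈ ball 0 δ) : y t ∈ χ γ := by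
  have hmode := tendsto_principal.1 (tendsto_inf.1 (h.tendsto_add_atTop_inf_mode ht)).2
  refine hcl.mem_of_tendsto (h.tendsto.apply_nhds t) ?_
  filter_upwards [hmode] with u hu
  exact mem_singleton_iff.1 hu.2 ▸ hχ _ hu.1

lemma hasDerivAt (h : IsWindowLimit x σ δ γ l y) (hf : ∀ γ, Continuous fun ξ => f ξ γ)
    (hx : IsTrajectory f x σ) (hσ : RightLocConst σ) {K : Set (EuclideanSpace ℝ (Fin n))}
    (hK : IsCompact K) (hxK : ∀ᶠ t in atTop, x t ∈ K) {t : ℝ} (ht : t ∈ ball 0 δ) :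
    HasDerivAt y (f (y t) γ) t := by
  obtain ⟨M, hM⟩ := hK.exists_bound_of_continuousOn (hf γ).continuousOn
  obtain ⟨T, hT⟩ := eventually_atTop.1 hxK
  have hwindow : ∀ u, ∀ t ∈ ball (0 : ℝ) δ, u + t ∈ ball u δ := fun u t ht => by
    simpa [mem_ball] using ht
  have hlarge : ∀ c, ∀ᶠ u in l, ∀ t ∈ ball (0 : ℝ) δ, c < u + t := fun c => by
    filter_upwards [h.le_atTop (eventually_ge_atTop (c + δ))] with u hu t ht
    have := (Real.ball_eq_Ioo u δ ▸ hwindow u t ht).1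
    linarith
  have hderiv : ∀ᶠ u in l, ∀ t ∈ ball (0 : ℝ) δ,
      HasDerivAt (fun t => x (u + t)) (f (x (u + t)) γ) t := by
    filter_upwards [h.eventually_mode, hlarge 0] with u hu hpos t ht
    have hmode : ∀ᶠ s in 𝓝 (u + t), σ s = γ := by
      filter_upwards [isOpen_ball.mem_nhds (hwindow u t ht)] with s hs using hu s hs
    have := hx.hasDerivAt hf hσ (hpos t ht) (notMem_switchTimes_of_eventually_eq hmode)
    rw [hmode.self_of_nhds] at this
    exact this.comp_const_add u t
  have hbound : ∀ᶠ u in l, ∀ t ∈ ball (0 : ℝ) δ, ‖f (x (u + t)) γ‖₊ ≤ M.toNNReal := by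
    filter_upwards [hlarge T] with u hu t ht
    exact NNReal.le_toNNReal_of_coe_le (hM _ (hT _ (hu t ht).le))
  exact hasDerivAt_of_tendsto isOpen_ball (convex_ball 0 δ) (hf γ) hderiv hbound h.tendsto ht

lemma fderiv_eq_zero (h : IsWindowLimit x σ δ γ l y) {v : EuclideanSpace ℝ (Fin n) → ℝ}
    (hv : Differentiable ℝ v) (hanti : AntitoneOn (fun t => v (x t)) (Ici 0 ∩ σ ⁻¹' {γ})) {t : ℝ}
    (ht : t ∈ ball 0 δ) {w : EuclideanSpace ℝ (Fin n)} (hy : HasDerivAt y w t) :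
    fderiv ℝ v (y t) w = 0 := by
  have hlim : ∀ s, Tendsto (fun u => v (x (u + s))) l (𝓝 (v (y s))) := fun s =>
    (hv.continuous.tendsto _).comp (h.tendsto.apply_nhds s)
  have hconst : (fun s => v (y s)) =ᶠ[𝓝 t] fun _ => v (y t) := by
    filter_upwards [isOpen_ball.mem_nhds ht] with s hs
    exact eq_of_tendsto_of_antitoneOn hanti (h.tendsto_add_atTop_inf_mode hs)
      (h.tendsto_add_atTop_inf_mode ht) (hlim s) (hlim t)
  exact ((hv (y t)).hasFDerivAt.comp_hasDerivAt t hy).unique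
    ((hasDerivAt_const t _).congr_of_eventuallyEq hconst)

end IsWindowLimit

lemma IsWeakLyap.mapClusterPt_zero {n m : ℕ}
    {f : EuclideanSpace ℝ (Fin n) → Fin m → EuclideanSpace ℝ (Fin n)}
    (hf : ∀ γ, Continuous fun ξ => f ξ γ) {χ : Fin m → Set (EuclideanSpace ℝ (Fin n))}
    (hχcl : ∀ γ, IsClosed (χ γ)) {T' : Set ((ℝ → EuclideanSpace ℝ (Fin n)) × (ℝ → Fin m))}
    {V : EuclideanSpace ℝ (Fin n) → Fin m → ℝ} (hV : IsWeakLyap f χ T' V)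
    {W : Fin m → EuclideanSpace ℝ (Fin n) → ℝ} (hWnn : ∀ γ ξ, 0 ≤ W γ ξ)
    (hder : ∀ ξ, ∀ γ, ξ ∈ χ γ → fderiv ℝ (fun ζ => V ζ γ) ξ (f ξ γ) ≤ -(W γ ξ)) {δ : ℝ}
    (hdist : ∀ γ, ∀ y : ℝ → EuclideanSpace ℝ (Fin n),
      (∀ t ∈ Ico 0 δ, HasDerivAt y (f (y t) γ) t) → (∀ t ∈ Ico 0 δ, W γ (y t) = 0) → y 0 = 0)
    {p : (ℝ → EuclideanSpace ℝ (Fin n)) × (ℝ → Fin m)} (hp : p ∈ T') (hx : IsTrajectory f p.1 p.2)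
    (hχ : InTchi χ p.1 p.2) (hσ : RightLocConst p.2) (hdw : HasWeakDwell p.2 δ)
    {K : Set (EuclideanSpace ℝ (Fin n))} (hK : IsCompact K) (hxK : ∀ᶠ t in atTop, p.1 t ∈ K) :
    MapClusterPt 0 atTop p.1 := by
  obtain ⟨γ, l, y, _, hy⟩ := hdw.exists_isWindowLimit hK hxK
  have hball : Ico 0 δ ⊆ ball 0 δ := fun t ht => by
    rw [Real.ball_eq_Ioo]
    exact ⟨by linarith [ht.1, ht.2], by linarith [ht.2]⟩
  have hsol : ∀ t ∈ Ico 0 δ, HasDerivAt y (f (y t) γ) t := fun t ht =>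
    hy.hasDerivAt hf hx hσ hK hxK (hball ht)
  have hW : ∀ t ∈ Ico 0 δ, W γ (y t) = 0 := fun t ht => by
    have hdot : fderiv ℝ (fun ξ => V ξ γ) (y t) (f (y t) γ) = 0 :=
      hy.fderiv_eq_zero ((hV.1 γ).differentiable one_ne_zero)
        (hV.antitoneOn_mode hf hp hx hχ hσ γ) (hball ht) (hsol t ht)
    have hle := hder _ _ (hy.mem_of_inTchi (hχcl γ) hχ (hball ht))
    exact le_antisymm (by linarith) (hWnn γ (y t))
  rw [← hdist γ y hsol hW]
  exact hy.mapClusterPt_zero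

end LaSalle

theorem stmt17_general {n m : ℕ}
    (f : EuclideanSpace ℝ (Fin n) → Fin m → EuclideanSpace ℝ (Fin n))
    (hf : ∀ γ : Fin m, Continuous (fun ξ => f ξ γ))
    (χ : Fin m → Set (EuclideanSpace ℝ (Fin n)))
    (hχcl : ∀ γ, IsClosed (χ γ))
    (T' : Set ((ℝ → EuclideanSpace ℝ (Fin n)) × (ℝ → Fin m)))
    (hT' : ∀ p ∈ T', IsTrajectory f p.1 p.2 ∧ InTchi χ p.1 p.2 ∧ RightLocConst p.2 ∧
      ∃ δ > 0, HasWeakDwell p.2 δ)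
    (V : EuclideanSpace ℝ (Fin n) → Fin m → ℝ)
    (hV : IsWeakLyap f χ T' V)
    (W : Fin m → EuclideanSpace ℝ (Fin n) → ℝ)
    (hWnn : ∀ γ ξ, 0 ≤ W γ ξ)
    (hder : ∀ ξ, ∀ γ : Fin m, ξ ∈ χ γ →
      fderiv ℝ (fun ζ => V ζ γ) ξ (f ξ γ) ≤ -(W γ ξ))
    (hdist : ∀ γ : Fin m, ∀ δ : ℝ, 0 < δ →
      ∀ y : ℝ → EuclideanSpace ℝ (Fin n),
        (∀ t ∈ Ico (0 : ℝ) δ, HasDerivAt y (f (y t) γ) t) →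
        (∀ t ∈ Ico (0 : ℝ) δ, W γ (y t) = 0) → y 0 = 0) :
    (∃ α : ℝ → ℝ, IsKinf α ∧
      ∀ p ∈ T', ∀ t₀ t : ℝ, 0 ≤ t₀ → t₀ ≤ t → ‖p.1 t‖ ≤ α ‖p.1 t₀‖) ∧
    ∀ p ∈ T', Tendsto p.1 atTop (𝓝 0) := by
  obtain ⟨α, hα, hstab⟩ := hV.exists_isKinf_norm_le hf fun p hp =>
    ⟨(hT' p hp).1, (hT' p hp).2.1, (hT' p hp).2.2.1⟩
  refine ⟨⟨α, hα, hstab⟩, fun p hp => ?_⟩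
  obtain ⟨hx, hχ, hσ, δ, hδ, hdw⟩ := hT' p hp
  have hbdd : ∀ᶠ t in atTop, p.1 t ∈ closedBall 0 (α ‖p.1 0‖) := by
    filter_upwards [eventually_ge_atTop 0] with t ht
    exact mem_closedBall_zero_iff.2 (hstab p hp 0 t le_rfl ht)
  have hcluster : MapClusterPt 0 atTop p.1 :=
    hV.mapClusterPt_zero hf hχcl hWnn hder (fun γ => hdist γ δ hδ) hp hx hχ hσ hdw
      (isCompact_closedBall _ _) hbdd
  exact tendsto_zero_of_mapClusterPt hα.1.continuousAt hα.2.2.1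
    (fun t₀ ht₀ t ht => hstab p hp t₀ t ht₀ ht) hcluster

/-- zero small-time distinguishability criterion: suppose `V` is a weak
Lyapunov-like function for `T'` (members of `T'` being trajectories in `𝒯[χ] ∩ 𝒯_a`,
with `f(0,γ) = 0` for `γ ∈ Γ* = {γ : 0 ∈ χ_γ}`), and there are continuous nonnegative
functions `W_γ` with `∇_ξV(ξ,γ)·f(ξ,γ) ≤ -W_γ(ξ)` on `χ_γ` such that each system
`ẋ = f_γ(x), y = W_γ(x)` is zero small-time distinguishable. Then `T'` is globally
asymptotically stable: uniformly stable, and every state trajectory converges to `0`. -/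
theorem stmt17 {n m : ℕ}
    (f : EuclideanSpace ℝ (Fin n) → Fin m → EuclideanSpace ℝ (Fin n))
    (hf : ∀ γ : Fin m, Continuous (fun ξ => f ξ γ))
    (χ : Fin m → Set (EuclideanSpace ℝ (Fin n)))
    (hχcl : ∀ γ, IsClosed (χ γ)) (hχcov : (⋃ γ, χ γ) = Set.univ)
    (hf0 : ∀ γ : Fin m, (0 : EuclideanSpace ℝ (Fin n)) ∈ χ γ → f 0 γ = 0)
    (T' : Set ((ℝ → EuclideanSpace ℝ (Fin n)) × (ℝ → Fin m)))
    (hT' : ∀ p ∈ T', IsTrajectory f p.1 p.2 ∧ InTchi χ p.1 p.2 ∧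
      ∃ τD : ℝ, 0 < τD ∧ ∃ N₀ : ℕ, IsSwitchingSignal p.2 τD N₀)
    (V : EuclideanSpace ℝ (Fin n) → Fin m → ℝ)
    (hV : IsWeakLyap f χ T' V)
    (W : Fin m → EuclideanSpace ℝ (Fin n) → ℝ)
    (hWcont : ∀ γ, Continuous (W γ)) (hWnn : ∀ γ ξ, 0 ≤ W γ ξ)
    (hder : ∀ ξ, ∀ γ : Fin m, ξ ∈ χ γ →
      fderiv ℝ (fun ζ => V ζ γ) ξ (f ξ γ) ≤ -(W γ ξ))
    (hdist : ∀ γ : Fin m, ∀ δ : ℝ, 0 < δ →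
      ∀ y : ℝ → EuclideanSpace ℝ (Fin n),
        (∀ t ∈ Set.Ico (0:ℝ) δ, HasDerivAt y (f (y t) γ) t) →
        (∀ t ∈ Set.Ico (0:ℝ) δ, W γ (y t) = 0) → y 0 = 0) :
    (∃ α : ℝ → ℝ, IsKinf α ∧
      ∀ p ∈ T', ∀ t₀ t : ℝ, 0 ≤ t₀ → t₀ ≤ t → ‖p.1 t‖ ≤ α ‖p.1 t₀‖) ∧
    ∀ p ∈ T', Tendsto p.1 atTop (nhds 0) := by
  exact stmt17_general f hf χ hχcl T' (fun p hp => (hT' p hp).imp_right <| And.imp_right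
    fun ⟨_, hτD, _, hσ⟩ => ⟨hσ.1, hσ.exists_hasWeakDwell hτD⟩) V hV W hWnn hder hdist
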